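/- Let T be a tree on n vertices with odd diameter, where 4 ≤ n ≤ 15, and let ξ_n(T) denote the smallest eigenvalue of the eccentricity matrix 𝓔(T). Then ξ_n(T) ≤ −√((13n−35+√((13n−35)²−64(n−3)))/2), with equality if and only if T is isomorphic to T_{n,3}^{0,n−4}. -/

import Mathlib

open SimpleGraph Finset Matrix Polynomial

/-- The eccentricity of a vertex: the greatest distance from `u` to any vertex. -/
noncomputable def ecc {V : Type*} [Fintype V] (G : SimpleGraph V) (u : V) : ℕ :=
  Finset.univ.sup fun v => G.dist u v

/-- The diameter of a graph: the greatest distance between any pair of vertices. -/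
noncomputable def gdiam {V : Type*} [Fintype V] (G : SimpleGraph V) : ℕ :=
  Finset.univ.sup fun p : V × V => G.dist p.1 p.2

/-- The eccentricity matrix: `(u,v)` entry is `d(u,v)` if `d(u,v) = min (e u) (e v)`,
and `0` otherwise. -/
noncomputable def eccMatrix {V : Type*} [Fintype V] (G : SimpleGraph V) : Matrix V V ℝ :=
  Matrix.of fun u v =>
    if G.dist u v = min (ecc G u) (ecc G v) then (G.dist u v : ℝ) else 0

/-- The least eigenvalue of a real matrix, as the infimum of the real roots of its
characteristic polynomial. -/
noncomputable def minEig {m : Type*} [Fintype m] [DecidableEq m] (M : Matrix m m ℝ) : ℝ :=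
  sInf {x : ℝ | M.charpoly.IsRoot x}

/-- The tree `T_{n,d}^{a,b}`: the path `v₀v₁⋯v_d` together with `a` pendant vertices attached
to `v_{(d-1)/2}` and `b` pendant vertices attached to `v_{(d+1)/2}`. -/
def Tndab (d a b : ℕ) : SimpleGraph (Fin (d+1) ⊕ Fin a ⊕ Fin b) :=
  SimpleGraph.fromRel (fun x y =>
    (∃ i : Fin d, x = Sum.inl i.castSucc ∧ y = Sum.inl i.succ) ∨
    (∃ j : Fin a, x = Sum.inl ⟨(d-1)/2, by omega⟩ ∧ y = Sum.inr (Sum.inl j)) ∨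
    (∃ j : Fin b, x = Sum.inl ⟨(d+1)/2, by omega⟩ ∧ y = Sum.inr (Sum.inr j)))

/-!
Deleting the central edge `ab` of a tree of diameter `2 * r + 1` leaves two components of radius
`r` around `a` and `b`, and a distance across that edge is the sum of the distances to it plus one.
So the eccentricity matrix vanishes inside each component, and its least eigenvalue is minus its
spectral radius. If `r = 1`, the tree is a double star and a positive eigenvector, constant on the
leaves of each centre, gives the spectral radius exactly; with `p` and `q` leaves at the centres and
`p + q` fixed it increases with `p * q`, so it is smallest when one of the centres has a single
leaf. If `r ≥ 2`, a test vector built from the rows of two diametral vertices already forces a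
larger spectral radius, as long as the tree has at most 15 vertices.
-/

section LeastEigenvalue

variable {V : Type*} [Fintype V] [DecidableEq V]

lemma isRoot_charpoly_iff_exists_mulVec_eq_smul {K : Type*} [Field K] {E : Matrix V V K} {x : K} :
    E.charpoly.IsRoot x ↔ ∃ v ≠ 0, E *ᵥ v = x • v := by
  rw [IsRoot.def, eval_charpoly, ← exists_mulVec_eq_zero_iff]
  refine exists_congr fun v => and_congr_right fun _ => ?_
  rw [sub_mulVec, sub_eq_zero, scalar_apply, ← smul_one_eq_diagonal, smul_mulVec, one_mulVec,
    eq_comm]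

variable {E : Matrix V V ℝ}

lemma minEig_le_of_mulVec_eq_smul {x : ℝ} {v : V → ℝ} (hv₀ : v ≠ 0) (hv : E *ᵥ v = x • v) :
    minEig E ≤ x :=
  csInf_le (finite_setOfPred_isRoot E.charpoly_monic.ne_zero).bddBelow
    (isRoot_charpoly_iff_exists_mulVec_eq_smul.2 ⟨v, hv₀, hv⟩)

lemma minEig_mul_dotProduct_self_le (hE : E.IsHermitian) (y : V → ℝ) :
    minEig E * (y ⬝ᵥ y) ≤ y ⬝ᵥ (E *ᵥ y) := by
  have hshift : (E - minEig E • 1).IsHermitian :=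
    hE.sub (by simp [IsHermitian])
  have hpos : (E - minEig E • 1).PosSemidef := by
    refine hshift.posSemidef_iff_eigenvalues_nonneg.2 fun i => ?_
    have hne : (hshift.eigenvectorBasis i).ofLp ≠ 0 := fun h₀ =>
      hshift.eigenvectorBasis.orthonormal.ne_zero i (WithLp.ofLp_injective 2 h₀)
    have heig := hshift.mulVec_eigenvectorBasis i
    rw [sub_mulVec, smul_mulVec, one_mulVec, sub_eq_iff_eq_add, ← add_smul] at heig
    have := minEig_le_of_mulVec_eq_smul hne heig
    simpa using this
  have := hpos.dotProduct_mulVec_nonneg y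
  simp only [sub_mulVec, smul_mulVec, one_mulVec, star_trivial, dotProduct_sub, dotProduct_smul,
    smul_eq_mul] at this
  linarith

lemma minEig_eq_of_mulVec_eq_smul {t : ℝ} (hle : ∀ y : V → ℝ, t * (y ⬝ᵥ y) ≤ y ⬝ᵥ (E *ᵥ y))
    {v : V → ℝ} (hv₀ : v ≠ 0) (hv : E *ᵥ v = t • v) : minEig E = t := by
  refine IsLeast.csInf_eq ⟨isRoot_charpoly_iff_exists_mulVec_eq_smul.2 ⟨v, hv₀, hv⟩, ?_⟩
  intro x hx
  obtain ⟨w, hw₀, hw⟩ := isRoot_charpoly_iff_exists_mulVec_eq_smul.1 hx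
  have hwt := hle w
  rw [hw, dotProduct_smul, smul_eq_mul] at hwt
  have hww : 0 < w ⬝ᵥ w := by simpa using dotProduct_star_self_pos_iff.2 hw₀
  exact le_of_mul_le_mul_right hwt hww

end LeastEigenvalue

section BipartiteMatrix

variable {V : Type*} [DecidableEq V] {A : Finset V} {E : Matrix V V ℝ}

/-- The sign vector of the bipartition `(A, Aᶜ)`. Conjugation by it negates a matrix whose entries
vanish inside both parts, which is why such a matrix has symmetric spectrum. -/
def bipartitionSign (A : Finset V) : V → ℝ := fun x => if x ∈ A then 1 else -1

lemma bipartitionSign_mul_self (A : Finset V) (x : V) :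
    bipartitionSign A x * bipartitionSign A x = 1 := by
  unfold bipartitionSign
  split_ifs <;> norm_num

variable [Fintype V]

lemma mulVec_bipartitionSign_mul (hA : ∀ x y, (x ∈ A ↔ y ∈ A) → E x y = 0) (f : V → ℝ) :
    E *ᵥ (bipartitionSign A * f) = -(bipartitionSign A * (E *ᵥ f)) := by
  ext x
  simp only [mulVec, dotProduct, Pi.mul_apply, Pi.neg_apply, mul_sum, ← sum_neg_distrib]
  refine sum_congr rfl fun y _ => ?_
  by_cases hxy : x ∈ A ↔ y ∈ A
  · simp [hA x y hxy]
  · by_cases hx : x ∈ A <;> simp_all [bipartitionSign]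

lemma bipartitionSign_mul_dotProduct (A : Finset V) (f g : V → ℝ) :
    (bipartitionSign A * f) ⬝ᵥ (bipartitionSign A * g) = f ⬝ᵥ g :=
  sum_congr rfl fun x _ => by
    rw [Pi.mul_apply, Pi.mul_apply, mul_mul_mul_comm, bipartitionSign_mul_self, one_mul]

lemma minEig_mul_dotProduct_self_le_neg (hE : E.IsHermitian)
    (hA : ∀ x y, (x ∈ A ↔ y ∈ A) → E x y = 0) (f : V → ℝ) :
    minEig E * (f ⬝ᵥ f) ≤ -(f ⬝ᵥ (E *ᵥ f)) := by
  simpa only [mulVec_bipartitionSign_mul hA, dotProduct_neg, bipartitionSign_mul_dotProduct] using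
    minEig_mul_dotProduct_self_le hE (bipartitionSign A * f)

lemma dotProduct_ite_mem_pair {u w : V} (huw : u ≠ w) (k g : V → ℝ) (τ : ℝ) :
    (k ⬝ᵥ fun x => if x ∈ ({u, w} : Finset V) then τ else g x) =
      τ * (k u + k w) + ∑ x ∈ {u, w}ᶜ, k x * g x := by
  rw [dotProduct, ← sum_add_sum_compl {u, w}, sum_pair huw, if_pos (by simp), if_pos (by simp),
    ← add_mul, mul_comm τ]
  exact congrArg _ (sum_congr rfl fun x hx => by rw [if_neg (mem_compl.1 hx)])

/-- The test vector is `τ` at `u` and `w` and `E x u + E x w` at every other `x`. -/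
lemma exists_mul_dotProduct_self_lt_of_sum_sq (hE : E.IsHermitian) (hnonneg : ∀ x y, 0 ≤ E x y)
    {u w : V} (huw : u ≠ w) {τ : ℝ} (hτ : 0 < τ)
    (h : 2 * τ ^ 2 < 2 * E u w * τ + ∑ x ∈ {u, w}ᶜ, (E x u + E x w) ^ 2) :
    ∃ f : V → ℝ, τ * (f ⬝ᵥ f) < f ⬝ᵥ (E *ᵥ f) := by
  have hsymm : ∀ x y, E x y = E y x := fun x y => hE.apply y x
  set g : V → ℝ := fun x => E x u + E x w
  set G : ℝ := ∑ x ∈ {u, w}ᶜ, g x ^ 2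
  have hg₀ : ∀ x, 0 ≤ g x := fun x => add_nonneg (hnonneg x u) (hnonneg x w)
  set f : V → ℝ := fun x => if x ∈ ({u, w} : Finset V) then τ else g x
  have hdot : ∀ k : V → ℝ, k ⬝ᵥ f = τ * (k u + k w) + ∑ x ∈ {u, w}ᶜ, k x * g x :=
    fun k => dotProduct_ite_mem_pair huw k g τ
  have hrow : ∀ x, (E *ᵥ f) x = τ * g x + ∑ y ∈ {u, w}ᶜ, E x y * g y := fun x => hdot (E x)
  have hself : f ⬝ᵥ f = 2 * τ ^ 2 + G := by
    have hfu : f u = τ := if_pos (by simp)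
    have hfw : f w = τ := if_pos (by simp)
    have hfg : ∀ x ∈ ({u, w} : Finset V)ᶜ, f x = g x := fun x hx => if_neg (mem_compl.1 hx)
    rw [hdot, hfu, hfw, sum_congr rfl fun x hx => by rw [hfg x hx, ← sq]]
    ring
  have hcentres : 2 * E u w * τ + G ≤ (E *ᵥ f) u + (E *ᵥ f) w := by
    have hG : G = ∑ y ∈ {u, w}ᶜ, E u y * g y + ∑ y ∈ {u, w}ᶜ, E w y * g y := by
      rw [← sum_add_distrib]
      exact sum_congr rfl fun y _ => by rw [hsymm u, hsymm w, sq, ← add_mul]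
    have hgu : E u w ≤ g u := le_add_of_nonneg_left (hnonneg u u)
    have hgw : E u w ≤ g w := (hsymm u w).trans_le (le_add_of_nonneg_right (hnonneg w w))
    rw [hrow, hrow, hG]
    nlinarith
  have hothers : τ * G ≤ ∑ x ∈ {u, w}ᶜ, (E *ᵥ f) x * g x := by
    rw [mul_sum]
    refine sum_le_sum fun x _ => ?_
    rw [sq, ← mul_assoc, hrow]
    gcongr
    · exact hg₀ x
    · exact le_add_of_nonneg_right (sum_nonneg fun y _ => mul_nonneg (hnonneg x y) (hg₀ y))
  refine ⟨f, ?_⟩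
  rw [hself, dotProduct_comm f, hdot]
  nlinarith

lemma minEig_lt_neg_of_sum_sq (hE : E.IsHermitian) (hnonneg : ∀ x y, 0 ≤ E x y)
    (hA : ∀ x y, (x ∈ A ↔ y ∈ A) → E x y = 0) {u w : V} (huw : u ≠ w) {τ : ℝ} (hτ : 0 < τ)
    (h : 2 * τ ^ 2 < 2 * E u w * τ + ∑ x ∈ {u, w}ᶜ, (E x u + E x w) ^ 2) :
    minEig E < -τ := by
  obtain ⟨f, hf⟩ := exists_mul_dotProduct_self_lt_of_sum_sq hE hnonneg huw hτ h
  have := minEig_mul_dotProduct_self_le_neg hE hA f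
  have hff : 0 ≤ f ⬝ᵥ f := sum_nonneg fun x _ => mul_self_nonneg (f x)
  exact lt_of_mul_lt_mul_right (by linarith) hff

/-- Expand `0 ≤ ∑ x y, E x y * v x * v y * (f x / v x + f y / v y) ^ 2`. -/
lemma neg_mul_dotProduct_self_le_of_pos_eigenvector {V : Type*} [Fintype V] {E : Matrix V V ℝ}
    (hE : E.IsHermitian) (hnonneg : ∀ x y, 0 ≤ E x y) {σ : ℝ} {v : V → ℝ} (hv₀ : ∀ x, 0 < v x)
    (hv : E *ᵥ v = σ • v) (f : V → ℝ) : -σ * (f ⬝ᵥ f) ≤ f ⬝ᵥ (E *ᵥ f) := by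
  have hdiag : ∑ x, ∑ y, E x y * v y * (f x ^ 2 / v x) = σ * (f ⬝ᵥ f) := by
    rw [dotProduct, mul_sum]
    refine sum_congr rfl fun x _ => ?_
    have hx : ∑ y, E x y * v y = σ * v x := congrFun hv x
    have := (hv₀ x).ne'
    rw [← sum_mul, hx]
    field_simp
  have hdiag' : ∑ x, ∑ y, E x y * v x * (f y ^ 2 / v y) = σ * (f ⬝ᵥ f) := by
    rw [sum_comm, ← hdiag]
    exact sum_congr rfl fun x _ => sum_congr rfl fun y _ => by rw [← hE.apply x y, star_trivial]
  have hform : ∑ x, f x * ∑ y, E x y * f y = f ⬝ᵥ (E *ᵥ f) := rfl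
  have hsum : 0 ≤ ∑ x, ∑ y, E x y * v x * v y * (f x / v x + f y / v y) ^ 2 :=
    sum_nonneg fun x _ => sum_nonneg fun y _ =>
      mul_nonneg (mul_nonneg (mul_nonneg (hnonneg x y) (hv₀ x).le) (hv₀ y).le) (sq_nonneg _)
  have hexpand : ∀ x y, E x y * v x * v y * (f x / v x + f y / v y) ^ 2 =
      E x y * v y * (f x ^ 2 / v x) + E x y * v x * (f y ^ 2 / v y) +
        2 * (f x * (E x y * f y)) := by
    intro x y
    have hx := (hv₀ x).ne'
    have hy := (hv₀ y).ne'
    field_simp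
    ring
  simp only [hexpand, sum_add_distrib, ← mul_sum, hdiag, hdiag', hform] at hsum
  linarith

lemma minEig_eq_neg_of_pos_eigenvector [Nonempty V] (hE : E.IsHermitian)
    (hnonneg : ∀ x y, 0 ≤ E x y) (hA : ∀ x y, (x ∈ A ↔ y ∈ A) → E x y = 0) {σ : ℝ} {v : V → ℝ}
    (hv₀ : ∀ x, 0 < v x) (hv : E *ᵥ v = σ • v) : minEig E = -σ := by
  refine minEig_eq_of_mulVec_eq_smul (v := bipartitionSign A * v)
    (neg_mul_dotProduct_self_le_of_pos_eigenvector hE hnonneg hv₀ hv) ?_ ?_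
  · obtain ⟨x⟩ := ‹Nonempty V›
    have hsign := left_ne_zero_of_mul_eq_one (bipartitionSign_mul_self A x)
    exact fun h₀ => mul_ne_zero hsign (hv₀ x).ne' (congrFun h₀ x)
  · rw [mulVec_bipartitionSign_mul hA, hv, mul_smul_comm, neg_smul]

end BipartiteMatrix

section EccentricityMatrix

variable {V : Type*} [Fintype V]

lemma eccMatrix_isHermitian (G : SimpleGraph V) : (eccMatrix G).IsHermitian := by
  ext x y
  simp only [conjTranspose_apply, star_trivial, eccMatrix, of_apply, dist_comm (u := x),
    min_comm (ecc G x)]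

lemma eccMatrix_nonneg (G : SimpleGraph V) (x y : V) : 0 ≤ eccMatrix G x y := by
  rw [eccMatrix, of_apply]
  split_ifs <;> positivity

lemma dist_le_ecc (G : SimpleGraph V) (x y : V) : G.dist x y ≤ ecc G x :=
  le_sup (f := G.dist x) (mem_univ y)

lemma dist_le_gdiam (G : SimpleGraph V) (x y : V) : G.dist x y ≤ gdiam G :=
  le_sup (f := fun p : V × V => G.dist p.1 p.2) (mem_univ (x, y))

lemma exists_dist_eq_gdiam [Nonempty V] (G : SimpleGraph V) : ∃ x y, G.dist x y = gdiam G := by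
  obtain ⟨⟨x, y⟩, -, h⟩ :=
    exists_mem_eq_sup univ univ_nonempty fun p : V × V => G.dist p.1 p.2
  exact ⟨x, y, h.symm⟩

end EccentricityMatrix

section Bridge

variable {V : Type*} {G : SimpleGraph V} {a b x y : V}

lemma exists_walk_notMem_edges_of_dist_lt (hG : G.Connected) (hx : G.dist x a < G.dist x b) :
    ∃ p : G.Walk x a, s(a, b) ∉ p.edges := by
  classical
  obtain ⟨p, hp⟩ := hG.exists_walk_length_eq_dist x a
  refine ⟨p, fun hmem => ?_⟩
  have hb := p.snd_mem_support_of_mem_edges hmem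
  have := dist_le (p.takeUntil b hb)
  have := p.length_takeUntil_le_length hb
  omega

lemma dist_eq_of_isBridge (hG : G.Connected) (hab : G.IsBridge s(a, b))
    (hx : G.dist x a < G.dist x b) (hy : G.dist y b < G.dist y a) :
    G.dist x y = G.dist x a + 1 + G.dist y b := by
  classical
  obtain ⟨p, hp⟩ := hG.exists_walk_length_eq_dist x y
  obtain ⟨q, hq⟩ := exists_walk_notMem_edges_of_dist_lt hG hx
  obtain ⟨q', hq'⟩ := exists_walk_notMem_edges_of_dist_lt hG hy
  have hmem : s(a, b) ∈ p.edges := by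
    have := isBridge_iff_forall_walk_mem_edges.1 hab ((q.reverse.append p).append q')
    simp only [Walk.edges_append, Walk.edges_reverse, List.mem_append, List.mem_reverse] at this
    rw [Sym2.eq_swap] at hq'
    tauto
  have ha := p.fst_mem_support_of_mem_edges hmem
  have hlength := congrArg Walk.length (p.take_spec ha)
  rw [Walk.length_append] at hlength
  have hxa := dist_le (p.takeUntil a ha)
  have hay := dist_le (p.dropUntil a ha)
  have hxay := hG.dist_triangle (u := x) (v := a) (w := y)
  have hyba := hG.dist_triangle (u := y) (v := b) (w := a)
  have : G.dist b a = 1 := dist_eq_one_iff_adj.2 (p.adj_of_mem_edges hmem).symm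
  rw [dist_comm (u := a)] at hay hxay
  omega

end Bridge

section CentralEdge

variable {V : Type*} [Fintype V] {T : SimpleGraph V} {a b x y : V} {r : ℕ}

/-- The vertices closer to `a` than to `b`. For an edge `ab` of a tree, this is the component of
`a` after that edge is deleted. -/
noncomputable def nearSide (T : SimpleGraph V) (a b : V) : Finset V :=
  {x | T.dist x a < T.dist x b}

lemma mem_nearSide : x ∈ nearSide T a b ↔ T.dist x a < T.dist x b := by
  simp [nearSide]

lemma ne_of_mem_nearSide (hx : x ∈ nearSide T a b) (hy : y ∈ nearSide T b a) : x ≠ y := by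
  rintro rfl
  exact lt_asymm (mem_nearSide.1 hx) (mem_nearSide.1 hy)

lemma left_mem_nearSide (hab : T.Adj a b) : a ∈ nearSide T a b := by
  rw [mem_nearSide, dist_self, dist_eq_one_iff_adj.2 hab]
  exact one_pos

lemma notMem_nearSide_iff (hT : T.IsTree) (hab : T.Adj a b) :
    x ∉ nearSide T a b ↔ x ∈ nearSide T b a := by
  have := hT.dist_ne_of_adj x hab
  rw [mem_nearSide, mem_nearSide]
  omega

lemma dist_eq_of_mem_nearSide (hT : T.IsTree) (hab : T.Adj a b) (hx : x ∈ nearSide T a b)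
    (hy : y ∈ nearSide T b a) : T.dist x y = T.dist x a + 1 + T.dist y b :=
  dist_eq_of_isBridge hT.connected (isAcyclic_iff_forall_adj_isBridge.1 hT.isAcyclic hab)
    (mem_nearSide.1 hx) (mem_nearSide.1 hy)

/-- `ab` is the central edge of the tree `T` of diameter `2 * r + 1`: both components left by
deleting it have radius exactly `r` around their end of the edge. -/
structure IsCentralEdge (T : SimpleGraph V) (r : ℕ) (a b : V) : Prop where
  isTree : T.IsTree
  adj : T.Adj a b
  dist_le_left : ∀ x ∈ nearSide T a b, T.dist x a ≤ r
  dist_le_right : ∀ x ∈ nearSide T b a, T.dist x b ≤ r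
  exists_left : ∃ u ∈ nearSide T a b, T.dist u a = r
  exists_right : ∃ w ∈ nearSide T b a, T.dist w b = r

lemma exists_isCentralEdge (hT : T.IsTree) (hdiam : gdiam T = 2 * r + 1) :
    ∃ a b, IsCentralEdge T r a b := by
  have := hT.connected.nonempty
  obtain ⟨u, w, huw⟩ := exists_dist_eq_gdiam T
  obtain ⟨p, hp⟩ := hT.connected.exists_walk_length_eq_dist u w
  have hadj : T.Adj (p.getVert r) (p.getVert (r + 1)) := p.adj_getVert_succ (by omega)
  have hua := dist_le (p.take r)
  have hwb := dist_le (p.drop (r + 1)).reverse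
  simp only [Walk.take_length, Walk.length_reverse, Walk.drop_length] at hua hwb
  generalize p.getVert r = a at *
  generalize p.getVert (r + 1) = b at *
  have hba : T.dist b a = 1 := dist_eq_one_iff_adj.2 hadj.symm
  have huaw := hT.connected.dist_triangle (u := u) (v := a) (w := w)
  have hubw := hT.connected.dist_triangle (u := u) (v := b) (w := w)
  have hwba := hT.connected.dist_triangle (u := w) (v := b) (w := a)
  rw [dist_comm (u := a)] at huaw
  rw [dist_comm (u := b)] at hubw
  have hu : u ∈ nearSide T a b := mem_nearSide.2 (by omega)
  have hw : w ∈ nearSide T b a := mem_nearSide.2 (by omega)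
  refine ⟨a, b, hT, hadj, fun x hx => ?_, fun x hx => ?_, ⟨u, hu, by omega⟩, ⟨w, hw, by omega⟩⟩
  · have := dist_eq_of_mem_nearSide hT hadj hx hw
    have := dist_le_gdiam T x w
    omega
  · have := dist_eq_of_mem_nearSide hT hadj hu hx
    have := dist_le_gdiam T u x
    omega

namespace IsCentralEdge

lemma symm (h : IsCentralEdge T r a b) : IsCentralEdge T r b a :=
  ⟨h.isTree, h.adj.symm, h.dist_le_right, h.dist_le_left, h.exists_right, h.exists_left⟩

lemma notMem_nearSide_iff (h : IsCentralEdge T r a b) :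
    x ∉ nearSide T a b ↔ x ∈ nearSide T b a :=
  _root_.notMem_nearSide_iff h.isTree h.adj

lemma compl_nearSide [DecidableEq V] (h : IsCentralEdge T r a b) :
    (nearSide T a b)ᶜ = nearSide T b a := by
  ext x
  rw [mem_compl, h.notMem_nearSide_iff]

lemma card_add_card (h : IsCentralEdge T r a b) :
    #(nearSide T a b) + #(nearSide T b a) = Fintype.card V := by
  classical
  rw [← h.compl_nearSide, card_add_card_compl]

lemma dist_le_add (h : IsCentralEdge T r a b) (x y : V) :
    T.dist x y ≤ T.dist x a + T.dist y a := by
  simpa only [dist_comm (u := a)] using h.isTree.connected.dist_triangle (u := x) (v := a) (w := y)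

lemma dist_eq (h : IsCentralEdge T r a b) (hx : x ∈ nearSide T a b) (hy : y ∈ nearSide T b a) :
    T.dist x y = T.dist x a + 1 + T.dist y b :=
  dist_eq_of_mem_nearSide h.isTree h.adj hx hy

lemma ecc_eq (h : IsCentralEdge T r a b) (hx : x ∈ nearSide T a b) :
    ecc T x = T.dist x a + 1 + r := by
  refine le_antisymm (Finset.sup_le fun y _ => ?_) ?_
  · by_cases hy : y ∈ nearSide T a b
    · have := h.dist_le_add x y
      have := h.dist_le_left y hy
      omega
    · have hy := h.notMem_nearSide_iff.1 hy
      have := h.dist_eq hx hy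
      have := h.dist_le_right y hy
      omega
  · obtain ⟨w, hw, hwr⟩ := h.exists_right
    rw [← hwr, ← h.dist_eq hx hw]
    exact dist_le_ecc T x w

lemma eccMatrix_eq_zero_of_mem_of_mem (h : IsCentralEdge T r a b) (hx : x ∈ nearSide T a b)
    (hy : y ∈ nearSide T a b) : eccMatrix T x y = 0 := by
  have := h.dist_le_add x y
  have := h.dist_le_left x hx
  have := h.dist_le_left y hy
  rw [eccMatrix, of_apply, h.ecc_eq hx, h.ecc_eq hy, if_neg (by omega)]

lemma eccMatrix_eq_zero (h : IsCentralEdge T r a b) (x y : V)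
    (hxy : x ∈ nearSide T a b ↔ y ∈ nearSide T a b) : eccMatrix T x y = 0 := by
  by_cases hx : x ∈ nearSide T a b
  · exact h.eccMatrix_eq_zero_of_mem_of_mem hx (hxy.1 hx)
  · exact h.symm.eccMatrix_eq_zero_of_mem_of_mem (h.notMem_nearSide_iff.1 hx)
      (h.notMem_nearSide_iff.1 (hxy.not.1 hx))

lemma eccMatrix_eq (h : IsCentralEdge T r a b) (hx : x ∈ nearSide T a b)
    (hy : y ∈ nearSide T b a) :
    eccMatrix T x y =
      if T.dist x a = r ∨ T.dist y b = r then (T.dist x a : ℝ) + 1 + T.dist y b else 0 := by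
  have := h.dist_le_left x hx
  have := h.dist_le_right y hy
  rw [eccMatrix, of_apply, h.ecc_eq hx, h.symm.ecc_eq hy, h.dist_eq hx hy]
  push_cast
  exact if_congr (by omega) rfl rfl

end IsCentralEdge

end CentralEdge

section LargeRadius

variable {V : Type*} [Fintype V] {T : SimpleGraph V} {a b u w x : V} {r : ℕ}

namespace IsCentralEdge

lemma eccMatrix_add_eccMatrix_eq (h : IsCentralEdge T r a b) (hx : x ∈ nearSide T a b)
    (hu : u ∈ nearSide T a b) (hw : w ∈ nearSide T b a) (hwr : T.dist w b = r) :
    eccMatrix T x u + eccMatrix T x w = T.dist x a + 1 + r := by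
  rw [h.eccMatrix_eq_zero_of_mem_of_mem hx hu, h.eccMatrix_eq hx hw, if_pos (Or.inr hwr), hwr,
    zero_add]

lemma add_two_le_eccMatrix_add_eccMatrix (h : IsCentralEdge T r a b) (hxa : x ≠ a) (hxb : x ≠ b)
    (hu : u ∈ nearSide T a b) (hur : T.dist u a = r) (hw : w ∈ nearSide T b a)
    (hwr : T.dist w b = r) : (r : ℝ) + 2 ≤ eccMatrix T x u + eccMatrix T x w := by
  by_cases hx : x ∈ nearSide T a b
  · have : (1 : ℝ) ≤ T.dist x a := by exact_mod_cast h.isTree.connected.pos_dist_of_ne hxa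
    linarith [h.eccMatrix_add_eccMatrix_eq hx hu hw hwr]
  · have : (1 : ℝ) ≤ T.dist x b := by exact_mod_cast h.isTree.connected.pos_dist_of_ne hxb
    linarith [h.symm.eccMatrix_add_eccMatrix_eq (h.notMem_nearSide_iff.1 hx) hw hu hur]

variable [DecidableEq V]

lemma two_mul_sq_add_le_sum_sq (h : IsCentralEdge T r a b) (hr : r ≠ 0)
    (hu : u ∈ nearSide T a b) (hur : T.dist u a = r) (hw : w ∈ nearSide T b a)
    (hwr : T.dist w b = r) :
    2 * ((r : ℝ) + 1) ^ 2 + (Fintype.card V - 4) * (r + 2) ^ 2 ≤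
      ∑ x ∈ {u, w}ᶜ, (eccMatrix T x u + eccMatrix T x w) ^ 2 := by
  have ha := left_mem_nearSide h.adj
  have hb := left_mem_nearSide h.adj.symm
  have hua : u ≠ a := by rintro rfl; exact hr (hur ▸ dist_self)
  have hwb : w ≠ b := by rintro rfl; exact hr (hwr ▸ dist_self)
  have hsub : ({a, b} : Finset V) ⊆ {u, w}ᶜ := by
    simp [subset_iff, hua.symm, hwb.symm, ne_of_mem_nearSide ha hw,
      (ne_of_mem_nearSide hu hb).symm]
  have hcard : (({u, w}ᶜ \ {a, b} : Finset V).card : ℝ) = Fintype.card V - 4 := by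
    have hsdiff := card_sdiff_add_card_eq_card hsub
    have hcompl := card_add_card_compl ({u, w} : Finset V)
    rw [card_pair (ne_of_mem_nearSide hu hw)] at hcompl
    rw [card_pair (ne_of_mem_nearSide ha hb)] at hsdiff
    rw [eq_sub_iff_add_eq]
    norm_cast
    omega
  have hrest : (Fintype.card V - 4) * ((r : ℝ) + 2) ^ 2 ≤
      ∑ x ∈ {u, w}ᶜ \ {a, b}, (eccMatrix T x u + eccMatrix T x w) ^ 2 := by
    rw [← hcard, ← nsmul_eq_mul]
    refine card_nsmul_le_sum _ _ _ fun x hx => ?_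
    simp only [mem_sdiff, mem_insert, mem_singleton, not_or] at hx
    have := h.add_two_le_eccMatrix_add_eccMatrix hx.2.1 hx.2.2 hu hur hw hwr
    gcongr
  rw [← sum_sdiff hsub, sum_pair (ne_of_mem_nearSide ha hb),
    h.eccMatrix_add_eccMatrix_eq ha hu hw hwr, add_comm (eccMatrix T b u),
    h.symm.eccMatrix_add_eccMatrix_eq hb hw hu hur, dist_self, dist_self]
  push_cast
  linarith

lemma minEig_lt_neg_of_two_mul_sq_lt (h : IsCentralEdge T r a b) (hr : r ≠ 0) {τ : ℝ} (hτ : 0 < τ)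
    (hlt : 2 * τ ^ 2 <
      2 * (2 * r + 1) * τ + 2 * (r + 1) ^ 2 + (Fintype.card V - 4) * (r + 2) ^ 2) :
    minEig (eccMatrix T) < -τ := by
  obtain ⟨u, hu, hur⟩ := h.exists_left
  obtain ⟨w, hw, hwr⟩ := h.exists_right
  have hEuw : eccMatrix T u w = 2 * r + 1 := by
    rw [h.eccMatrix_eq hu hw, if_pos (Or.inl hur), hur, hwr]
    ring
  refine minEig_lt_neg_of_sum_sq (eccMatrix_isHermitian T) (eccMatrix_nonneg T)
    h.eccMatrix_eq_zero (ne_of_mem_nearSide hu hw) hτ ?_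
  rw [hEuw]
  linarith [h.two_mul_sq_add_le_sum_sq hr hu hur hw hwr]

lemma minEig_lt_neg_sqrt_of_two_le (h : IsCentralEdge T r a b) (hr : 2 ≤ r)
    (h4 : 4 ≤ Fintype.card V) (h15 : Fintype.card V ≤ 15) :
    minEig (eccMatrix T) < -√(13 * Fintype.card V - 35) := by
  have hr' : (2 : ℝ) ≤ r := by exact_mod_cast hr
  have h4' : (4 : ℝ) ≤ Fintype.card V := by exact_mod_cast h4
  have h15' : (Fintype.card V : ℝ) ≤ 15 := by exact_mod_cast h15
  set n : ℝ := (Fintype.card V : ℝ)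
  have hτ : 0 < √(13 * n - 35) := Real.sqrt_pos.2 (by linarith)
  have hsq : √(13 * n - 35) ^ 2 = 13 * n - 35 := Real.sq_sqrt (by linarith)
  have hle : 5 * n - 12 < 5 * √(13 * n - 35) := by
    refine lt_of_pow_lt_pow_left₀ 2 (by positivity) ?_
    rw [mul_pow, hsq]
    -- The larger root of `25 * n ^ 2 - 445 * n + 1019` lies between 15 and 16.
    nlinarith
  refine h.minEig_lt_neg_of_two_mul_sq_lt (by omega) hτ ?_
  calc 2 * √(13 * n - 35) ^ 2 < 2 * (2 * 2 + 1) * √(13 * n - 35) + 2 * (2 + 1) ^ 2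
        + (n - 4) * (2 + 2) ^ 2 := by linarith
    _ ≤ 2 * (2 * r + 1) * √(13 * n - 35) + 2 * (r + 1) ^ 2 + (n - 4) * (r + 2) ^ 2 := by
      have : 0 ≤ n - 4 := by linarith
      gcongr

end IsCentralEdge

end LargeRadius

section DoubleStarRadius

variable {p q p' q' : ℝ}

/-- The spectral radius of the eccentricity matrix of the double star with `p` and `q` leaves at
its two centres: the largest root of `(x ^ 2 - 4 * p) * (x ^ 2 - 4 * q) = 9 * p * q * x ^ 2`. -/
noncomputable def doubleStarRadius (p q : ℝ) : ℝ :=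
  √((9 * (p * q) + 4 * (p + q) + √((9 * (p * q) + 4 * (p + q)) ^ 2 - 64 * (p * q))) / 2)

lemma sq_doubleStarRadius (hp : 0 ≤ p) (hq : 0 ≤ q) :
    doubleStarRadius p q ^ 2 =
      (9 * (p * q) + 4 * (p + q) + √((9 * (p * q) + 4 * (p + q)) ^ 2 - 64 * (p * q))) / 2 :=
  Real.sq_sqrt (by positivity)

lemma doubleStarRadius_pos (hp : 0 < p) (hq : 0 < q) : 0 < doubleStarRadius p q :=
  Real.sqrt_pos.2 (by positivity)

lemma four_mul_lt_sq_doubleStarRadius (hp : 0 < p) (hq : 0 < q) :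
    4 * p < doubleStarRadius p q ^ 2 := by
  have hlt : 8 * p - (9 * (p * q) + 4 * (p + q)) <
      √((9 * (p * q) + 4 * (p + q)) ^ 2 - 64 * (p * q)) := by
    refine Real.lt_sqrt_of_sq_lt ?_
    have : 0 < p ^ 2 * q := by positivity
    linear_combination 144 * this
  rw [sq_doubleStarRadius hp.le hq.le]
  linarith

lemma doubleStarRadius_eq (hp : 0 ≤ p) (hq : 0 ≤ q) :
    (doubleStarRadius p q ^ 2 - 4 * p) * (doubleStarRadius p q ^ 2 - 4 * q) =
      9 * (p * q) * doubleStarRadius p q ^ 2 := by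
  have hdisc : 0 ≤ (9 * (p * q) + 4 * (p + q)) ^ 2 - 64 * (p * q) := by
    have : 0 ≤ p * q * (81 * (p * q) + 72 * (p + q)) := by positivity
    linear_combination this + 16 * sq_nonneg (p - q)
  rw [sq_doubleStarRadius hp hq]
  linear_combination Real.sq_sqrt hdisc / 4

lemma doubleStarRadius_le_sqrt (hp : 0 ≤ p) (hq : 0 ≤ q) :
    doubleStarRadius p q ≤ √(9 * (p * q) + 4 * (p + q)) := by
  have : √((9 * (p * q) + 4 * (p + q)) ^ 2 - 64 * (p * q)) ≤ 9 * (p * q) + 4 * (p + q) := by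
    refine Real.sqrt_le_iff.2 ⟨by positivity, sub_le_self _ (by positivity)⟩
  exact Real.sqrt_le_sqrt (by linarith)

lemma doubleStarRadius_lt (hp : 0 ≤ p) (hq : 0 ≤ q) (hsum : p + q = p' + q') (hone : 1 ≤ p + q)
    (hlt : p * q < p' * q') : doubleStarRadius p q < doubleStarRadius p' q' := by
  have hpq : 0 ≤ p * q := mul_nonneg hp hq
  have hdisc : (9 * (p * q) + 4 * (p + q)) ^ 2 - 64 * (p * q) ≤
      (9 * (p' * q') + 4 * (p' + q')) ^ 2 - 64 * (p' * q') := by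
    rw [← hsum]
    nlinarith
  refine Real.sqrt_lt_sqrt (by positivity) ?_
  have := Real.sqrt_le_sqrt hdisc
  linarith

end DoubleStarRadius

section DoubleStar

variable {V : Type*} [Fintype V] {T : SimpleGraph V} {a b x : V} {p q : ℕ}

namespace IsCentralEdge

lemma eccMatrix_mulVec_eq_sum {r : ℕ} (h : IsCentralEdge T r a b) (hx : x ∈ nearSide T a b)
    (f : V → ℝ) :
    (eccMatrix T *ᵥ f) x = ∑ y ∈ nearSide T b a, eccMatrix T x y * f y := by
  refine (sum_subset (subset_univ _) fun y _ hy => mul_eq_zero_of_left ?_ _).symm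
  exact h.eccMatrix_eq_zero_of_mem_of_mem hx (h.symm.notMem_nearSide_iff.1 hy)

lemma dist_eq_one (h : IsCentralEdge T 1 a b) (hx : x ∈ nearSide T a b) (hxa : x ≠ a) :
    T.dist x a = 1 :=
  le_antisymm (h.dist_le_left x hx) (h.isTree.connected.pos_dist_of_ne hxa)

lemma eccMatrix_mulVec_left (h : IsCentralEdge T 1 a b) (hq : #(nearSide T b a) = q + 1)
    {f : V → ℝ} {γ : ℝ} (hf : ∀ y ∈ nearSide T b a, y ≠ b → f y = γ) :
    (eccMatrix T *ᵥ f) a = 2 * q * γ := by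
  classical
  have ha := left_mem_nearSide h.adj
  have hb := left_mem_nearSide h.adj.symm
  have hleaf : ∀ y ∈ (nearSide T b a).erase b, eccMatrix T a y * f y = 2 * γ := by
    intro y hy
    rw [mem_erase] at hy
    rw [h.eccMatrix_eq ha hy.2, h.symm.dist_eq_one hy.2 hy.1, if_pos (Or.inr rfl), dist_self,
      hf y hy.2 hy.1]
    norm_num
  rw [h.eccMatrix_mulVec_eq_sum ha, ← add_sum_erase _ _ hb, sum_congr rfl hleaf, sum_const,
    card_erase_of_mem hb, hq, h.eccMatrix_eq ha hb, dist_self, dist_self, nsmul_eq_mul]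
  norm_num
  ring

lemma eccMatrix_mulVec_of_ne_left (h : IsCentralEdge T 1 a b) (hq : #(nearSide T b a) = q + 1)
    (hx : x ∈ nearSide T a b) (hxa : x ≠ a) {f : V → ℝ} {γ : ℝ}
    (hf : ∀ y ∈ nearSide T b a, y ≠ b → f y = γ) :
    (eccMatrix T *ᵥ f) x = 2 * f b + 3 * q * γ := by
  classical
  have hb := left_mem_nearSide h.adj.symm
  have hxa := h.dist_eq_one hx hxa
  have hleaf : ∀ y ∈ (nearSide T b a).erase b, eccMatrix T x y * f y = 3 * γ := by
    intro y hy
    rw [mem_erase] at hy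
    rw [h.eccMatrix_eq hx hy.2, h.symm.dist_eq_one hy.2 hy.1, if_pos (Or.inr rfl), hxa,
      hf y hy.2 hy.1]
    norm_num
  rw [h.eccMatrix_mulVec_eq_sum hx, ← add_sum_erase _ _ hb, sum_congr rfl hleaf, sum_const,
    card_erase_of_mem hb, hq, h.eccMatrix_eq hx hb, hxa, dist_self, nsmul_eq_mul]
  norm_num
  ring

variable [DecidableEq V]

lemma minEig_eq_neg_of_pos_quotient_eigenvector (h : IsCentralEdge T 1 a b)
    (hp : #(nearSide T a b) = p + 1) (hq : #(nearSide T b a) = q + 1) {σ α β γ δ : ℝ}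
    (hα₀ : 0 < α) (hβ₀ : 0 < β) (hγ₀ : 0 < γ) (hδ₀ : 0 < δ) (hα : 2 * δ + 3 * q * γ = σ * α)
    (hβ : 2 * q * γ = σ * β) (hγ : 2 * β + 3 * p * α = σ * γ) (hδ : 2 * p * α = σ * δ) :
    minEig (eccMatrix T) = -σ := by
  have : Nonempty V := ⟨a⟩
  have ha := left_mem_nearSide h.adj
  have hb := left_mem_nearSide h.adj.symm
  set f : V → ℝ := fun x =>
    if x ∈ nearSide T a b then if x = a then β else α else if x = b then δ else γ
  have hfa : f a = β := by simp [f, ha]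
  have hfb : f b = δ := by simp [f, h.notMem_nearSide_iff.2 hb]
  have hfA : ∀ x ∈ nearSide T a b, x ≠ a → f x = α := fun x hx hxa => by simp [f, hx, hxa]
  have hfB : ∀ x ∈ nearSide T b a, x ≠ b → f x = γ := fun x hx hxb => by
    simp [f, h.notMem_nearSide_iff.2 hx, hxb]
  refine minEig_eq_neg_of_pos_eigenvector (eccMatrix_isHermitian T) (eccMatrix_nonneg T)
    h.eccMatrix_eq_zero (v := f) (fun x => ?_) (funext fun x => ?_)
  · dsimp only [f]
    split_ifs <;> assumption
  rw [Pi.smul_apply, smul_eq_mul]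
  by_cases hx : x ∈ nearSide T a b
  · obtain rfl | hxa := eq_or_ne x a
    · rw [h.eccMatrix_mulVec_left hq hfB, hfa, hβ]
    · rw [h.eccMatrix_mulVec_of_ne_left hq hx hxa hfB, hfb, hfA x hx hxa, hα]
  · replace hx := h.notMem_nearSide_iff.1 hx
    obtain rfl | hxb := eq_or_ne x b
    · rw [h.symm.eccMatrix_mulVec_left hp hfA, hfb, hδ]
    · rw [h.symm.eccMatrix_mulVec_of_ne_left hp hx hxb hfA, hfa, hfB x hx hxb, hγ]

lemma minEig_eq_neg_doubleStarRadius (h : IsCentralEdge T 1 a b)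
    (hp : #(nearSide T a b) = p + 1) (hq : #(nearSide T b a) = q + 1) (hp₀ : p ≠ 0) (hq₀ : q ≠ 0) :
    minEig (eccMatrix T) = -doubleStarRadius p q := by
  have hp' : (0 : ℝ) < p := by positivity
  have hq' : (0 : ℝ) < q := by positivity
  have hσ := doubleStarRadius_pos hp' hq'
  have hlt := sub_pos.2 (four_mul_lt_sq_doubleStarRadius hp' hq')
  have heq := doubleStarRadius_eq hp'.le hq'.le
  set σ := doubleStarRadius p q
  refine h.minEig_eq_neg_of_pos_quotient_eigenvector hp hq (α := 3 * q * σ ^ 2)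
    (β := 2 * q * (σ ^ 2 - 4 * p)) (γ := σ * (σ ^ 2 - 4 * p)) (δ := 6 * p * q * σ) (by positivity)
    (by positivity) (by positivity) (by positivity) (by ring) (by ring) ?_ (by ring)
  linear_combination -heq

end IsCentralEdge

end DoubleStar

section DoubleStarIso

lemma nonempty_iso_of_hom_bijective {V W : Type*} {G : SimpleGraph W} {T : SimpleGraph V}
    (hG : G.Connected) (hT : T.IsTree) (f : G →g T) (hf : Function.Bijective f) :
    Nonempty (G ≃g T) := by
  set e := Iso.map (Equiv.ofBijective f hf) G
  have hle : G.map (Equiv.ofBijective f hf) ≤ T := by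
    rintro _ _ ⟨-, x, y, hxy, rfl, rfl⟩
    exact f.map_adj hxy
  have heq := (isTree_iff_minimal_connected.1 hT).eq_of_le (e.connected_iff.1 hG) hle
  exact ⟨heq ▸ e⟩

variable {d p q : ℕ}

lemma Tndab_adj_succ (i : Fin d) :
    (Tndab d p q).Adj (Sum.inl i.castSucc) (Sum.inl i.succ) := by
  rw [Tndab, fromRel_adj]
  exact ⟨by simp [Fin.ext_iff], Or.inl (Or.inl ⟨i, rfl, rfl⟩)⟩

lemma Tndab_adj_inr_inl (j : Fin p) :
    (Tndab d p q).Adj (Sum.inr (Sum.inl j)) (Sum.inl ⟨(d - 1) / 2, by omega⟩) := by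
  rw [Tndab, fromRel_adj]
  exact ⟨Sum.inr_ne_inl, Or.inr (Or.inr (Or.inl ⟨j, rfl, rfl⟩))⟩

lemma Tndab_adj_inr_inr (j : Fin q) :
    (Tndab d p q).Adj (Sum.inr (Sum.inr j)) (Sum.inl ⟨(d + 1) / 2, by omega⟩) := by
  rw [Tndab, fromRel_adj]
  exact ⟨Sum.inr_ne_inl, Or.inr (Or.inr (Or.inr ⟨j, rfl, rfl⟩))⟩

lemma Tndab_connected (d p q : ℕ) : (Tndab d p q).Connected := by
  have hpath : ∀ i : Fin (d + 1), (Tndab d p q).Reachable (Sum.inl 0) (Sum.inl i) :=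
    Fin.induction .rfl fun i hi => hi.trans (Tndab_adj_succ i).reachable
  refine (connected_iff_exists_forall_reachable _).2 ⟨Sum.inl 0, ?_⟩
  rintro (i | j | j)
  · exact hpath i
  · exact (hpath _).trans (Tndab_adj_inr_inl j).symm.reachable
  · exact (hpath _).trans (Tndab_adj_inr_inr j).symm.reachable

lemma adj_of_Tndab_adj {V : Type*} {G : SimpleGraph V} {f : Fin (d + 1) ⊕ Fin p ⊕ Fin q → V}
    (hpath : ∀ i : Fin d, G.Adj (f (Sum.inl i.castSucc)) (f (Sum.inl i.succ)))
    (hleft : ∀ j, G.Adj (f (Sum.inl ⟨(d - 1) / 2, by omega⟩)) (f (Sum.inr (Sum.inl j))))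
    (hright : ∀ j, G.Adj (f (Sum.inl ⟨(d + 1) / 2, by omega⟩)) (f (Sum.inr (Sum.inr j))))
    {x y : Fin (d + 1) ⊕ Fin p ⊕ Fin q} (hxy : (Tndab d p q).Adj x y) : G.Adj (f x) (f y) := by
  rw [Tndab, fromRel_adj] at hxy
  obtain ⟨-, (⟨i, rfl, rfl⟩ | ⟨j, rfl, rfl⟩ | ⟨j, rfl, rfl⟩) |
    (⟨i, rfl, rfl⟩ | ⟨j, rfl, rfl⟩ | ⟨j, rfl, rfl⟩)⟩ := hxy
  exacts [hpath i, hleft j, hright j, (hpath i).symm, (hleft j).symm, (hright j).symm]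

variable {V : Type*} [Fintype V] {T : SimpleGraph V} {a b u w x : V}

lemma mem_nearSide_of_adj (hT : T.IsTree) (hab : T.Adj a b) (hxa : T.Adj x a) (hxb : x ≠ b) :
    x ∈ nearSide T a b := by
  have hpos := hT.connected.pos_dist_of_ne hxb
  have hne := hT.dist_ne_of_adj x hab
  rw [dist_eq_one_iff_adj.2 hxa] at hne
  rw [mem_nearSide, dist_eq_one_iff_adj.2 hxa]
  omega

lemma dist_le_one_of_mem_nearSide (hT : T.IsTree) (hab : T.Adj a b)
    (hstar : ∀ x, x ≠ a → x ≠ b → T.Adj x a ∨ T.Adj x b) (hx : x ∈ nearSide T a b) :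
    T.dist x a ≤ 1 := by
  obtain rfl | hxa := eq_or_ne x a
  · simp
  have hxb := ne_of_mem_nearSide hx (left_mem_nearSide hab.symm)
  obtain h | h := hstar x hxa hxb
  · exact (dist_eq_one_iff_adj.2 h).le
  · exact absurd rfl (ne_of_mem_nearSide hx (mem_nearSide_of_adj hT hab.symm h hxa))

lemma isCentralEdge_one_of_forall_adj (hT : T.IsTree) (hab : T.Adj a b)
    (hstar : ∀ x, x ≠ a → x ≠ b → T.Adj x a ∨ T.Adj x b) (hua : T.Adj u a) (hub : u ≠ b)
    (hwb : T.Adj w b) (hwa : w ≠ a) : IsCentralEdge T 1 a b where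
  isTree := hT
  adj := hab
  dist_le_left _ hx := dist_le_one_of_mem_nearSide hT hab hstar hx
  dist_le_right _ hx :=
    dist_le_one_of_mem_nearSide hT hab.symm (fun x hb ha => (hstar x ha hb).symm) hx
  exists_left := ⟨u, mem_nearSide_of_adj hT hab hua hub, dist_eq_one_iff_adj.2 hua⟩
  exists_right := ⟨w, mem_nearSide_of_adj hT hab.symm hwb hwa, dist_eq_one_iff_adj.2 hwb⟩

lemma isCentralEdge_of_iso_Tndab (hT : T.IsTree) (φ : Tndab 3 p q ≃g T) :
    IsCentralEdge T 1 (φ (Sum.inl 1)) (φ (Sum.inl 2)) := by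
  have hadj {x y} (h : (Tndab 3 p q).Adj x y) : T.Adj (φ x) (φ y) := φ.map_adj_iff.2 h
  have hua := hadj (Tndab_adj_succ (d := 3) 0)
  have hwb := (hadj (Tndab_adj_succ (d := 3) 2)).symm
  refine isCentralEdge_one_of_forall_adj hT (hadj (Tndab_adj_succ (d := 3) 1))
    (fun x hxa hxb => ?_) hua (φ.injective.ne (by simp)) hwb (φ.injective.ne (by simp))
  obtain ⟨i | j | j, rfl⟩ := φ.surjective x
  · fin_cases i
    exacts [.inl hua, absurd rfl hxa, absurd rfl hxb, .inr hwb]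
  · exact .inl (hadj (Tndab_adj_inr_inl j))
  · exact .inr (hadj (Tndab_adj_inr_inr j))

lemma card_nearSide_of_iso_Tndab (hT : T.IsTree) (φ : Tndab 3 p q ≃g T) :
    #(nearSide T (φ (Sum.inl 1)) (φ (Sum.inl 2))) = p + 2 := by
  have h := isCentralEdge_of_iso_Tndab hT φ
  have hleft {x} (hx : (Tndab 3 p q).Adj x (Sum.inl 1)) (hne : x ≠ Sum.inl 2) :=
    mem_nearSide_of_adj hT h.adj (φ.map_adj_iff.2 hx) (φ.injective.ne hne)
  have hright {x} (hx : (Tndab 3 p q).Adj x (Sum.inl 2)) (hne : x ≠ Sum.inl 1) :=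
    h.notMem_nearSide_iff.2
      (mem_nearSide_of_adj hT h.adj.symm (φ.map_adj_iff.2 hx) (φ.injective.ne hne))
  have hside : nearSide T (φ (Sum.inl 1)) (φ (Sum.inl 2)) =
      (disjSum {0, 1} (disjSum univ ∅)).map φ.toEmbedding.toEmbedding := by
    ext x
    obtain ⟨y, rfl⟩ := φ.surjective x
    refine Iff.trans ?_ (mem_map' φ.toEmbedding.toEmbedding).symm
    rcases y with i | j | j
    · fin_cases i
      · exact iff_of_true (hleft (Tndab_adj_succ (d := 3) 0) (by simp)) (by simp)
      · exact iff_of_true (left_mem_nearSide h.adj) (by simp)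
      · exact iff_of_false (h.notMem_nearSide_iff.2 (left_mem_nearSide h.adj.symm)) (by simp)
      · exact iff_of_false (hright (Tndab_adj_succ (d := 3) 2).symm (by simp)) (by simp)
    · exact iff_of_true (hleft (Tndab_adj_inr_inl j) (by simp)) (by simp)
    · exact iff_of_false (hright (Tndab_adj_inr_inr j) (by simp)) (by simp)
  rw [hside, card_map]
  simp [add_comm]

lemma IsCentralEdge.adj_left (h : IsCentralEdge T 1 a b) (hx : x ∈ nearSide T a b) (hxa : x ≠ a) :
    T.Adj x a :=
  dist_eq_one_iff_adj.1 (h.dist_eq_one hx hxa)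

lemma IsCentralEdge.exists_leaves (h : IsCentralEdge T 1 a b) (hp : #(nearSide T a b) = p + 2) :
    ∃ u, ∃ f : Fin p → V, T.Adj u a ∧ (∀ i, T.Adj (f i) a) ∧
      ∀ x ∈ nearSide T a b, x = a ∨ x = u ∨ x ∈ Set.range f := by
  classical
  obtain ⟨u, hu, hua⟩ := h.exists_left
  rw [dist_eq_one_iff_adj] at hua
  have hcard : #(((nearSide T a b).erase a).erase u) = p := by
    rw [card_erase_of_mem (mem_erase.2 ⟨hua.ne, hu⟩), card_erase_of_mem (left_mem_nearSide h.adj),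
      hp]
    rfl
  set e := (equivFinOfCardEq hcard).symm
  refine ⟨u, fun i => e i, hua, fun i => ?_, fun x hx => ?_⟩
  · have hi := (e i).2
    simp only [mem_erase] at hi
    exact h.adj_left hi.2.2 hi.2.1
  · by_cases hxa : x = a
    · exact .inl hxa
    by_cases hxu : x = u
    · exact .inr (.inl hxu)
    obtain ⟨i, hi⟩ := e.surjective ⟨x, mem_erase.2 ⟨hxu, mem_erase.2 ⟨hxa, hx⟩⟩⟩
    exact .inr (.inr ⟨i, congrArg Subtype.val hi⟩)

lemma IsCentralEdge.nonempty_iso_Tndab (h : IsCentralEdge T 1 a b)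
    (hp : #(nearSide T a b) = p + 2) (hq : #(nearSide T b a) = q + 2) :
    Nonempty (T ≃g Tndab 3 p q) := by
  classical
  obtain ⟨u, f, hua, hf, hA⟩ := h.exists_leaves hp
  obtain ⟨w, g, hwb, hg, hB⟩ := h.symm.exists_leaves hq
  set φ : Fin 4 ⊕ Fin p ⊕ Fin q → V := Sum.elim ![u, a, b, w] (Sum.elim f g)
  have hhom {x y} (hxy : (Tndab 3 p q).Adj x y) : T.Adj (φ x) (φ y) := by
    refine adj_of_Tndab_adj (fun i => ?_) (fun i => (hf i).symm) (fun j => (hg j).symm) hxy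
    fin_cases i
    exacts [hua, h.adj, hwb.symm]
  have hsurj : Function.Surjective φ := by
    intro x
    by_cases hx : x ∈ nearSide T a b
    · obtain rfl | rfl | ⟨i, rfl⟩ := hA x hx
      exacts [⟨.inl 1, rfl⟩, ⟨.inl 0, rfl⟩, ⟨.inr (.inl i), rfl⟩]
    · obtain rfl | rfl | ⟨j, rfl⟩ := hB x (h.notMem_nearSide_iff.1 hx)
      exacts [⟨.inl 2, rfl⟩, ⟨.inl 3, rfl⟩, ⟨.inr (.inr j), rfl⟩]
  have hcard : Fintype.card (Fin 4 ⊕ Fin p ⊕ Fin q) = Fintype.card V := by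
    rw [← h.card_add_card, hp, hq]
    simp only [Fintype.card_sum, Fintype.card_fin]
    ring
  obtain ⟨e⟩ := nonempty_iso_of_hom_bijective (Tndab_connected 3 p q) h.isTree ⟨φ, hhom⟩
    ((Fintype.bijective_iff_surjective_and_card φ).2 ⟨hsurj, hcard⟩)
  exact ⟨e.symm⟩

end DoubleStarIso

section ExtremalTree

variable {V : Type*} [Fintype V] {T : SimpleGraph V} {a b : V} {r : ℕ}

lemma IsCentralEdge.card_nearSide_zero (h : IsCentralEdge T 0 a b) : #(nearSide T a b) = 1 := by
  refine card_eq_one.2 ⟨a, eq_singleton_iff_unique_mem.2 ⟨left_mem_nearSide h.adj, fun x hx => ?_⟩⟩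
  exact (h.isTree.connected.dist_eq_zero_iff).1 (Nat.le_zero.1 (h.dist_le_left x hx))

lemma IsCentralEdge.exists_card_nearSide_eq_add_two (h : IsCentralEdge T 1 a b) :
    ∃ p, #(nearSide T a b) = p + 2 := by
  obtain ⟨u, hu, hua⟩ := h.exists_left
  have hne : u ≠ a := (dist_eq_one_iff_adj.1 hua).ne
  exact Nat.exists_eq_add_of_le' (one_lt_card.2 ⟨u, hu, a, left_mem_nearSide h.adj, hne⟩)

variable [DecidableEq V]

lemma minEig_eccMatrix_of_iso_Tndab (hT : T.IsTree) {q : ℕ} (e : T ≃g Tndab 3 0 q) :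
    minEig (eccMatrix T) = -doubleStarRadius 1 (q + 1) := by
  have h := isCentralEdge_of_iso_Tndab hT e.symm
  have hp := card_nearSide_of_iso_Tndab hT e.symm
  have hcard := e.card_eq
  have hsum := h.card_add_card
  simp only [Fintype.card_sum, Fintype.card_fin] at hcard
  simpa using h.minEig_eq_neg_doubleStarRadius (p := 1) (q := q + 1) hp (by omega) one_ne_zero
    q.succ_ne_zero

lemma IsCentralEdge.minEig_lt_or_nonempty_iso (h : IsCentralEdge T 1 a b) {m : ℕ}
    (hm : Fintype.card V = m + 4) :
    minEig (eccMatrix T) < -doubleStarRadius 1 (m + 1) ∨ Nonempty (T ≃g Tndab 3 0 m) := by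
  obtain ⟨p, hp⟩ := h.exists_card_nearSide_eq_add_two
  obtain ⟨q, hq⟩ := h.symm.exists_card_nearSide_eq_add_two
  have hsum := h.card_add_card
  obtain rfl : m = p + q := by omega
  obtain rfl | hp₀ := eq_or_ne p 0
  · exact .inr (h.nonempty_iso_Tndab hp (by omega))
  obtain rfl | hq₀ := eq_or_ne q 0
  · exact .inr (h.symm.nonempty_iso_Tndab hq (by omega))
  left
  rw [h.minEig_eq_neg_doubleStarRadius hp hq p.succ_ne_zero q.succ_ne_zero, neg_lt_neg_iff]
  have hpq : (0 : ℝ) < p * q := by positivity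
  apply doubleStarRadius_lt <;> push_cast <;> first | positivity | linarith

lemma minEig_eccMatrix_lt_or_nonempty_iso (hT : T.IsTree) (hodd : Odd (gdiam T)) {m : ℕ}
    (hm : Fintype.card V = m + 4) (hm' : m ≤ 11) :
    minEig (eccMatrix T) < -doubleStarRadius 1 (m + 1) ∨ Nonempty (T ≃g Tndab 3 0 m) := by
  obtain ⟨r, hr⟩ := hodd
  obtain ⟨a, b, h⟩ := exists_isCentralEdge hT hr
  obtain rfl | rfl | hr₂ : r = 0 ∨ r = 1 ∨ 2 ≤ r := by omega
  · have := h.card_add_card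
    rw [h.card_nearSide_zero, h.symm.card_nearSide_zero] at this
    omega
  · exact h.minEig_lt_or_nonempty_iso hm
  · refine .inl ((h.minEig_lt_neg_sqrt_of_two_le hr₂ (by omega) (by omega)).trans_le ?_)
    rw [neg_le_neg_iff, hm]
    refine (doubleStarRadius_le_sqrt zero_le_one (by positivity)).trans_eq (congrArg _ ?_)
    push_cast
    ring

end ExtremalTree

/-- Upper bound on the least eccentricity eigenvalue of a tree on `4 ≤ n ≤ 15` vertices with
odd diameter, with equality iff `T ≅ T_{n,3}^{0,n-4}`. -/
theorem stmt7 {V : Type*} [Fintype V] [DecidableEq V] (T : SimpleGraph V) (n : ℕ)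
    (hT : T.IsTree) (hn : Fintype.card V = n) (h4 : 4 ≤ n) (h15 : n ≤ 15)
    (hodd : Odd (gdiam T)) :
    minEig (eccMatrix T) ≤
      -Real.sqrt ((13*(n:ℝ) - 35 + Real.sqrt ((13*(n:ℝ) - 35)^2 - 64*((n:ℝ) - 3)))/2) ∧
    (minEig (eccMatrix T) =
        -Real.sqrt ((13*(n:ℝ) - 35 + Real.sqrt ((13*(n:ℝ) - 35)^2 - 64*((n:ℝ) - 3)))/2) ↔
      Nonempty (T ≃g Tndab 3 0 (n-4))) := by
  obtain ⟨m, rfl⟩ := Nat.exists_eq_add_of_le' h4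
  have hradius : √((13 * ((m + 4 : ℕ) : ℝ) - 35 + √((13 * ((m + 4 : ℕ) : ℝ) - 35) ^ 2 -
      64 * (((m + 4 : ℕ) : ℝ) - 3))) / 2) = doubleStarRadius 1 (m + 1) := by
    rw [doubleStarRadius]
    push_cast
    ring_nf
  rw [hradius, Nat.add_sub_cancel]
  have hiso (e : Nonempty (T ≃g Tndab 3 0 m)) :
      minEig (eccMatrix T) = -doubleStarRadius 1 (m + 1) := minEig_eccMatrix_of_iso_Tndab hT e.some
  obtain hlt | e := minEig_eccMatrix_lt_or_nonempty_iso hT hodd hn (by omega)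
  · exact ⟨hlt.le, fun h => absurd h hlt.ne, hiso⟩
  · exact ⟨(hiso e).le, fun _ => e, hiso⟩
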